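/- For all r, t ≥ 2, the partition dimension of the grid graph P_r × P_t equals 3. -/

import Mathlib

open SimpleGraph

/-- Distance from a vertex to a set of vertices: `min {d(v,x) : x ∈ P}`. -/
noncomputable def distToSet {V : Type*} (G : SimpleGraph V) (v : V) (P : Set V) : ℕ :=
  sInf ((G.dist v) '' P)

/-- `S` is a resolving set of `G`. -/
def IsResolvingSet {V : Type*} (G : SimpleGraph V) (S : Set V) : Prop :=
  ∀ u v : V, u ≠ v → ∃ w ∈ S, G.dist u w ≠ G.dist v w

/-- The metric dimension of `G`. -/
noncomputable def metricDim {V : Type*} (G : SimpleGraph V) : ℕ :=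
  sInf {n | ∃ S : Finset V, S.card = n ∧ IsResolvingSet G ↑S}

/-- `Π` is a resolving partition of `G`: a partition of the vertex set such that
distinct vertices have distinct vectors of distances to the parts. -/
def IsResolvingPartition {V : Type*} (G : SimpleGraph V) (Pi : Set (Set V)) : Prop :=
  Setoid.IsPartition Pi ∧
    ∀ u v : V, u ≠ v → ∃ P ∈ Pi, distToSet G u P ≠ distToSet G v P

/-- The partition dimension of `G`. -/
noncomputable def partitionDim {V : Type*} (G : SimpleGraph V) : ℕ :=
  sInf {n | ∃ Pi : Finset (Set V), Pi.card = n ∧ IsResolvingPartition G ↑Pi}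

lemma aux_dist_eq {V : Type*} (G : SimpleGraph V) (hc : G.Connected) (a : V) (f : V → ℕ)
    (h0 : ∀ v, f v = 0 → v = a) (ha : f a = 0)
    (h1 : ∀ u v, G.Adj u v → f u ≤ f v + 1)
    (h2 : ∀ v, f v ≠ 0 → ∃ w, G.Adj v w ∧ f w + 1 = f v) (v : V) : G.dist v a = f v := by
  apply le_antisymm
  · have key : ∀ n, ∀ v, f v = n → G.dist v a ≤ n := by
      intro n
      induction n with
      | zero => intro v hv; rw [h0 v hv]; simp
      | succ k ih =>
        intro v hv
        obtain ⟨w, hw, hf⟩ := h2 v (by omega)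
        have e1 := ih w (by omega)
        have e2 := hc.dist_triangle (u := v) (v := w) (w := a)
        have e3 : G.dist v w = 1 := SimpleGraph.dist_eq_one_iff_adj.mpr hw
        omega
    exact key _ v rfl
  · obtain ⟨p, hp⟩ := hc.exists_walk_length_eq_dist v a
    rw [← hp]
    have key : ∀ u w (p : G.Walk u w), f u ≤ f w + p.length := by
      intro u w p
      induction p with
      | nil => simp
      | cons h p ih =>
        have := h1 _ _ h
        simp only [SimpleGraph.Walk.length_cons]
        omega
    have := key _ _ p
    omega

lemma aux_self {V : Type*} (G : SimpleGraph V) {v : V} {P : Set V} (h : v ∈ P) :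
    distToSet G v P = 0 := by
  unfold distToSet
  rw [Nat.sInf_eq_zero]
  left
  exact ⟨v, h, by simp⟩

lemma aux_singleton {V : Type*} (G : SimpleGraph V) (v a : V) :
    distToSet G v {a} = G.dist v a := by
  simp [distToSet]

lemma aux_one {V : Type*} (G : SimpleGraph V) (hc : G.Connected) {v w : V} {P : Set V}
    (hv : v ∉ P) (hw : w ∈ P) (h : G.Adj v w) : distToSet G v P = 1 := by
  have e3 : G.dist v w = 1 := SimpleGraph.dist_eq_one_iff_adj.mpr h
  unfold distToSet
  apply le_antisymm
  · exact Nat.sInf_le ⟨w, hw, e3⟩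
  · refine le_csInf (Set.Nonempty.image _ ⟨w, hw⟩) ?_
    rintro _ ⟨x, hx, rfl⟩
    have : G.dist v x ≠ 0 := by
      intro h0
      rw [hc.dist_eq_zero_iff] at h0
      exact hv (h0 ▸ hx)
    omega

/-- In a connected graph where each edge lies on a 4-cycle, no 2-colouring is resolving. -/
lemma aux_two {V : Type*} (G : SimpleGraph V) (hc : G.Connected)
    (h4 : ∀ a b, G.Adj a b → ∃ c d, G.Adj b c ∧ G.Adj c d ∧ G.Adj d a ∧ c ≠ a ∧ d ≠ b)
    (A B : Set V) (hA : A.Nonempty) (hB : B.Nonempty) (hAB : ∀ v, v ∈ A ↔ v ∉ B)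
    (hres : ∀ u v : V, u ≠ v → distToSet G u A ≠ distToSet G v A ∨
      distToSet G u B ≠ distToSet G v B) : False := by
  have hBA : ∀ v, v ∈ B ↔ v ∉ A := fun v => by rw [hAB]; simp
  have uA : ∀ u v x y, u ∈ A → v ∈ A → x ∈ B → y ∈ B → G.Adj u x → G.Adj v y → u = v := by
    intro u v x y hu hv hx hy h1 h2
    by_contra hne
    rcases hres u v hne with h | h
    · exact h (by rw [aux_self G hu, aux_self G hv])
    · exact h (by rw [aux_one G hc ((hAB u).1 hu) hx h1, aux_one G hc ((hAB v).1 hv) hy h2])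
  have uB : ∀ u v x y, u ∈ B → v ∈ B → x ∈ A → y ∈ A → G.Adj u x → G.Adj v y → u = v := by
    intro u v x y hu hv hx hy h1 h2
    by_contra hne
    rcases hres u v hne with h | h
    · exact h (by rw [aux_one G hc ((hBA u).1 hu) hx h1, aux_one G hc ((hBA v).1 hv) hy h2])
    · exact h (by rw [aux_self G hu, aux_self G hv])
  have cross : ∀ u w (p : G.Walk u w), u ∈ A → w ∈ B → ∃ a b, a ∈ A ∧ b ∈ B ∧ G.Adj a b := by
    intro u w p
    induction p with
    | nil => intro h1 h2; exact absurd h2 ((hAB _).1 h1)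
    | @cons u v w h p ih =>
      intro h1 h2
      by_cases hv : v ∈ A
      · exact ih hv h2
      · exact ⟨u, v, h1, (hBA v).2 hv, h⟩
  obtain ⟨a0, ha0⟩ := hA
  obtain ⟨b0, hb0⟩ := hB
  obtain ⟨p⟩ := hc.preconnected a0 b0
  obtain ⟨a, b, ha, hb, hab⟩ := cross _ _ p ha0 hb0
  obtain ⟨c, d, hbc, hcd, hda, hca, hdb⟩ := h4 a b hab
  by_cases hcA : c ∈ A
  · exact hca (uA c a b b hcA ha hb hb hbc.symm hab)
  · have hcB := (hBA c).2 hcA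
    by_cases hdA : d ∈ A
    · have e1 := uB c b d a hcB hb hdA ha hcd hab.symm
      exact hbc.ne e1.symm
    · exact hdb (uB d b a a ((hBA d).2 hdA) hb ha ha hda hab.symm)

lemma aux_lower {V : Type*} (G : SimpleGraph V) (hc : G.Connected) (hn : Nontrivial V)
    (h4 : ∀ a b, G.Adj a b → ∃ c d, G.Adj b c ∧ G.Adj c d ∧ G.Adj d a ∧ c ≠ a ∧ d ≠ b)
    (Pi : Finset (Set V)) (h : IsResolvingPartition G ↑Pi) : 3 ≤ Pi.card := by
  obtain ⟨⟨hne, hex⟩, hres⟩ := h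
  obtain ⟨u, v, huv⟩ := hn
  by_contra hlt
  have hcard : Pi.card = 0 ∨ Pi.card = 1 ∨ Pi.card = 2 := by omega
  rcases hcard with h0 | h1 | h2
  · rw [Finset.card_eq_zero] at h0
    subst h0
    obtain ⟨P, hP, _⟩ := hres u v huv
    simp at hP
  · obtain ⟨A, rfl⟩ := Finset.card_eq_one.1 h1
    have hall : ∀ x, x ∈ A := by
      intro x
      obtain ⟨b, ⟨hb, hx⟩, _⟩ := hex x
      simp at hb
      exact hb ▸ hx
    obtain ⟨P, hP, hd⟩ := hres u v huv
    simp at hP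
    subst hP
    exact hd (by rw [aux_self G (hall u), aux_self G (hall v)])
  · obtain ⟨A, B, hAB, rfl⟩ := Finset.card_eq_two.1 h2
    simp only [Finset.coe_insert, Finset.coe_singleton, Set.mem_insert_iff,
      Set.mem_singleton_iff] at hne hex hres
    refine aux_two G hc h4 A B ?_ ?_ ?_ ?_
    · rw [Set.nonempty_iff_ne_empty]; rintro rfl; simp at hne
    · rw [Set.nonempty_iff_ne_empty]; rintro rfl; simp at hne
    · intro x
      obtain ⟨b, ⟨hb, hx⟩, hu⟩ := hex x
      constructor
      · intro hxA hxB
        exact hAB ((hu A ⟨Or.inl rfl, hxA⟩).trans (hu B ⟨Or.inr rfl, hxB⟩).symm)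
      · intro hxB
        rcases hb with rfl | rfl
        · exact hx
        · exact absurd hx hxB
    · intro u v huv
      obtain ⟨P, hP, hd⟩ := hres u v huv
      rcases hP with rfl | rfl
      · exact Or.inl hd
      · exact Or.inr hd

lemma aux_upper {V : Type*} (G : SimpleGraph V) (a b x : V) (hab : a ≠ b) (hxa : x ≠ a)
    (hxb : x ≠ b) (hres : ∀ u v, G.dist u a = G.dist v a → G.dist u b = G.dist v b → u = v) :
    ∃ Pi : Finset (Set V), Pi.card = 3 ∧ IsResolvingPartition G ↑Pi := by
  classical
  have n1 : ({a} : Set V) ≠ {b} := by simpa using hab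
  have n2 : ({a} : Set V) ≠ {y | y ≠ a ∧ y ≠ b} := by
    intro h
    have : a ∈ ({a} : Set V) := rfl
    rw [h] at this
    exact this.1 rfl
  have n3 : ({b} : Set V) ≠ {y | y ≠ a ∧ y ≠ b} := by
    intro h
    have : b ∈ ({b} : Set V) := rfl
    rw [h] at this
    exact this.2 rfl
  refine ⟨{{a}, {b}, {y | y ≠ a ∧ y ≠ b}}, Finset.card_eq_three.2 ⟨_, _, _, n1, n2, n3, rfl⟩, ⟨?_, ?_⟩, ?_⟩
  · simp only [Finset.coe_insert, Finset.coe_singleton, Set.mem_insert_iff,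
      Set.mem_singleton_iff]
    rintro (h | h | h)
    · exact Set.singleton_ne_empty a h.symm
    · exact Set.singleton_ne_empty b h.symm
    · have : x ∈ {y | y ≠ a ∧ y ≠ b} := ⟨hxa, hxb⟩
      rw [← h] at this
      exact this
  · intro y
    simp only [Finset.coe_insert, Finset.coe_singleton, Set.mem_insert_iff,
      Set.mem_singleton_iff]
    by_cases hya : y = a
    · subst hya
      refine ⟨{y}, ⟨Or.inl rfl, rfl⟩, ?_⟩
      rintro _ ⟨rfl | rfl | rfl, h⟩
      · rfl
      · exact absurd h hab
      · exact absurd rfl h.1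
    · by_cases hyb : y = b
      · subst hyb
        refine ⟨{y}, ⟨Or.inr (Or.inl rfl), rfl⟩, ?_⟩
        rintro _ ⟨rfl | rfl | rfl, h⟩
        · exact absurd h hya
        · rfl
        · exact absurd rfl h.2
      · refine ⟨_, ⟨Or.inr (Or.inr rfl), ⟨hya, hyb⟩⟩, ?_⟩
        rintro _ ⟨rfl | rfl | rfl, h⟩
        · exact absurd h hya
        · exact absurd h hyb
        · rfl
  · intro u v huv
    by_contra hcon
    push Not at hcon
    apply huv
    apply hres
    · have := hcon {a} (by simp)
      simpa only [aux_singleton] using this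
    · have := hcon {b} (by simp)
      simpa only [aux_singleton] using this

lemma aux_adj {r t : ℕ} (u v : Fin r × Fin t) :
    ((SimpleGraph.pathGraph r).boxProd (SimpleGraph.pathGraph t)).Adj u v ↔
      ((u.1.val + 1 = v.1.val ∨ v.1.val + 1 = u.1.val) ∧ u.2.val = v.2.val) ∨
      ((u.2.val + 1 = v.2.val ∨ v.2.val + 1 = u.2.val) ∧ u.1.val = v.1.val) := by
  simp [SimpleGraph.boxProd_adj, SimpleGraph.pathGraph_adj, Fin.ext_iff]

lemma aux_conn {r t : ℕ} (hr : 2 ≤ r) (ht : 2 ≤ t) :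
    ((SimpleGraph.pathGraph r).boxProd (SimpleGraph.pathGraph t)).Connected := by
  obtain ⟨r, rfl⟩ : ∃ k, r = k + 1 := ⟨r - 1, by omega⟩
  obtain ⟨t, rfl⟩ : ∃ k, t = k + 1 := ⟨t - 1, by omega⟩
  exact (SimpleGraph.pathGraph_connected r).boxProd (SimpleGraph.pathGraph_connected t)

lemma aux_nbr {n : ℕ} (hn : 2 ≤ n) (i : Fin n) :
    ∃ j : Fin n, i.val + 1 = j.val ∨ j.val + 1 = i.val := by
  by_cases h : i.val = 0
  · exact ⟨⟨1, by omega⟩, by simp; omega⟩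
  · exact ⟨⟨i.val - 1, by omega⟩, by simp; omega⟩

lemma aux_four {r t : ℕ} (hr : 2 ≤ r) (ht : 2 ≤ t) (a b : Fin r × Fin t)
    (h : ((SimpleGraph.pathGraph r).boxProd (SimpleGraph.pathGraph t)).Adj a b) :
    ∃ c d, ((SimpleGraph.pathGraph r).boxProd (SimpleGraph.pathGraph t)).Adj b c ∧
      ((SimpleGraph.pathGraph r).boxProd (SimpleGraph.pathGraph t)).Adj c d ∧
      ((SimpleGraph.pathGraph r).boxProd (SimpleGraph.pathGraph t)).Adj d a ∧ c ≠ a ∧ d ≠ b := by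
  rw [aux_adj] at h
  obtain ⟨a1, a2⟩ := a
  obtain ⟨b1, b2⟩ := b
  simp only at h
  rcases h with h | h
  · obtain ⟨j, hj⟩ := aux_nbr ht a2
    refine ⟨(b1, j), (a1, j), ?_⟩
    rw [aux_adj, aux_adj, aux_adj]
    dsimp only
    refine ⟨by omega, by omega, by omega, ?_, ?_⟩ <;>
    · rw [ne_eq, Prod.ext_iff, Fin.ext_iff, Fin.ext_iff]
      dsimp only
      omega
  · obtain ⟨j, hj⟩ := aux_nbr hr a1
    refine ⟨(j, b2), (j, a2), ?_⟩
    rw [aux_adj, aux_adj, aux_adj]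
    dsimp only
    refine ⟨by omega, by omega, by omega, ?_, ?_⟩ <;>
    · rw [ne_eq, Prod.ext_iff, Fin.ext_iff, Fin.ext_iff]
      dsimp only
      omega

lemma aux_d1 {r t : ℕ} (hr : 2 ≤ r) (ht : 2 ≤ t) (v : Fin r × Fin t) :
    ((SimpleGraph.pathGraph r).boxProd (SimpleGraph.pathGraph t)).dist v
      (⟨0, by omega⟩, ⟨0, by omega⟩) = v.1.val + v.2.val := by
  refine aux_dist_eq _ (aux_conn hr ht) _ (fun v => v.1.val + v.2.val) ?_ ?_ ?_ ?_ v
  · intro v hv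
    simp only [Prod.ext_iff, Fin.ext_iff]
    omega
  · rfl
  · intro u v h
    rw [aux_adj] at h
    show _ ≤ _
    omega
  · rintro ⟨i, j⟩ h
    simp only at h
    by_cases hi : i.val = 0
    · refine ⟨(i, ⟨j.val - 1, by omega⟩), ?_⟩
      rw [aux_adj]
      dsimp only
      refine ⟨?_, ?_⟩ <;> omega
    · refine ⟨(⟨i.val - 1, by omega⟩, j), ?_⟩
      rw [aux_adj]
      dsimp only
      refine ⟨?_, ?_⟩ <;> omega

lemma aux_d2 {r t : ℕ} (hr : 2 ≤ r) (ht : 2 ≤ t) (v : Fin r × Fin t) :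
    ((SimpleGraph.pathGraph r).boxProd (SimpleGraph.pathGraph t)).dist v
      (⟨0, by omega⟩, ⟨t - 1, by omega⟩) = v.1.val + (t - 1 - v.2.val) := by
  refine aux_dist_eq _ (aux_conn hr ht) _ (fun v => v.1.val + (t - 1 - v.2.val)) ?_ ?_ ?_ ?_ v
  · intro v hv
    simp only [Prod.ext_iff, Fin.ext_iff]
    omega
  · simp
  · intro u v h
    rw [aux_adj] at h
    show _ ≤ _
    omega
  · rintro ⟨i, j⟩ h
    simp only at h
    by_cases hi : i.val = 0
    · refine ⟨(i, ⟨j.val + 1, by omega⟩), ?_⟩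
      rw [aux_adj]
      dsimp only
      refine ⟨?_, ?_⟩ <;> omega
    · refine ⟨(⟨i.val - 1, by omega⟩, j), ?_⟩
      rw [aux_adj]
      dsimp only
      refine ⟨?_, ?_⟩ <;> omega

theorem stmt_16 (r t : ℕ) (hr : 2 ≤ r) (ht : 2 ≤ t) :
    partitionDim ((SimpleGraph.pathGraph r).boxProd (SimpleGraph.pathGraph t)) = 3 := by
  have hup := aux_upper ((SimpleGraph.pathGraph r).boxProd (SimpleGraph.pathGraph t))
    (⟨0, by omega⟩, ⟨0, by omega⟩) (⟨0, by omega⟩, ⟨t - 1, by omega⟩)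
    (⟨1, by omega⟩, ⟨0, by omega⟩) (by simp [Fin.ext_iff]; omega) (by simp [Fin.ext_iff])
    (by simp [Fin.ext_iff]) (by
      intro u v h1 h2
      rw [aux_d1 hr ht, aux_d1 hr ht] at h1
      rw [aux_d2 hr ht, aux_d2 hr ht] at h2
      simp only [Prod.ext_iff, Fin.ext_iff]
      omega)
  unfold partitionDim
  apply le_antisymm
  · exact Nat.sInf_le hup
  · apply le_csInf ⟨3, hup⟩
    rintro n ⟨Pi, rfl, hPi⟩
    refine aux_lower _ (aux_conn hr ht) ?_ (aux_four hr ht) Pi hPi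
    exact ⟨(⟨0, by omega⟩, ⟨0, by omega⟩), (⟨1, by omega⟩, ⟨0, by omega⟩), by simp [Fin.ext_iff]⟩
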